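/- L^p bound on the periodization of the Bessel-type kernel: Let d be a positive integer, σ>0 and p∈[1,∞]; for μ∈(0,1] write [μ]:=μ^{1/σ} and let K̃_μ be the fundamental solution of (1−[μ]²Δ)^{d+2} on ℝ^d, i.e. the nonnegative integrable function with ∫K̃_μ=1 whose Fourier transform equals ξ↦(1+[μ]²|ξ|²)^{−(d+2)}. Define the periodization 𝐓K̃_μ(x):=Σ_{y∈(2πℤ)^d}K̃_μ(x+y), a function on the torus 𝕋=(ℝ/2πℤ)^d. Then there exists a constant C (depending on d and p but not on μ) such that ‖𝐓K̃_μ‖_{L^p(𝕋)} ≤ C·[μ]^{−d(p−1)/p} for all μ∈(0,1] (with the convention d(p−1)/p = d for p=∞). -/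

import Mathlib

/-!
The periodization of the nonnegative kernel `K = K̃_μ` has `L¹` norm `∫ K = 1` on the torus
(`lintegral_unfold`). Its Fourier coefficients are, up to `(2π)^{-d}`, the values at integer points
of the Fourier transform of `K`, that is `(1 + ε²|n|²)^{-(d+2)}` with `ε = [μ]`. Their sum is at most
`(∑_{n ∈ ℤ} (1 + ε²n²)^{-1})^d ≤ (5/ε)^d` (`sum_lattice_le`), so the periodization is bounded almost
everywhere by `(5/ε)^d` (`periodize_ae_le`). Interpolating between `L¹` and `L^∞`
(`eLpNorm_le_interp`) gives `‖𝐓K‖_p ≤ (5/ε)^{d(p-1)/p}`.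

The passage from Fourier coefficients to the sup bound is made at the level of measures: the
push-forward of `K dx` to the torus has the same Fourier coefficients as the density given by an
absolutely convergent Fourier series, and is therefore dominated by a multiple of the push-forward
of Lebesgue measure on the fundamental domain (`measure_le_of_mFourier`).
-/

open MeasureTheory
open scoped ENNReal

noncomputable section

/-- Points of `ℝ^d`. -/
abbrev Vd (d : ℕ) := Fin d → ℝ

/-- The Fourier transform with the convention `𝓕f(ξ) = ∫ f(x) e^{-i⟨x,ξ⟩} dx`. -/
def ft (d : ℕ) (f : Vd d → ℝ) (ξ : Vd d) : ℂ :=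
  ∫ x : Vd d, Complex.exp (-Complex.I * (∑ i, (x i : ℂ) * (ξ i : ℂ))) * (f x : ℂ)

/-- The family `μ ↦ K̃_μ` of fundamental solutions of `(1 - [μ]²Δ)^{d+2}`, `[μ] = μ^{1/σ}`. -/
def IsBessel (d : ℕ) (σ : ℝ) (K : ℝ → Vd d → ℝ) : Prop :=
  ∀ μ ∈ Set.Ioc (0 : ℝ) 1,
    (∀ x, 0 ≤ K μ x) ∧ Integrable (K μ) ∧ (∫ x, K μ x) = 1 ∧
    ∀ ξ : Vd d,
      ft d (K μ) ξ
        = (((1 + (μ ^ (1 / σ)) ^ 2 * ∑ i, ξ i ^ 2) ^ (d + 2) : ℝ) : ℂ)⁻¹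

/-- The periodization `𝐓K(x) = Σ_{y ∈ (2πℤ)^d} K(x+y)`, viewed as a `(2πℤ)^d`-periodic
function on `ℝ^d` (i.e. a function on the torus `(ℝ/2πℤ)^d`). -/
def periodize (d : ℕ) (K : Vd d → ℝ) (x : Vd d) : ℝ :=
  ∑' k : Fin d → ℤ, K (x + fun i => 2 * Real.pi * (k i))

/-- A fundamental domain `[-π,π)^d` of the torus `(ℝ/2πℤ)^d`. -/
def fundDom (d : ℕ) : Set (Vd d) := Set.univ.pi fun _ : Fin d => Set.Ico (-Real.pi) Real.pi

/-- The exponent `d(p-1)/p`, with the convention that it equals `d` for `p = ∞`. -/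
def pExp (d : ℕ) (p : ℝ≥0∞) : ℝ :=
  if p = ⊤ then (d : ℝ) else (d : ℝ) * (p.toReal - 1) / p.toReal

open Filter Topology UnitAddTorus

/-! ### Measures on the torus and their Fourier coefficients -/

/-- If `ν` has the same Fourier coefficients as `g·lam`, with `g` continuous and `‖g‖ ≤ M`, then
`ν ≤ M·lam`. Trigonometric polynomials are uniformly dense in the continuous functions, so the two
measures have the same integrals of continuous functions, and indicators of closed sets are limits
of nonnegative continuous functions. -/
lemma measure_le_of_mFourier {ι : Type*} [Fintype ι] (ν lam : Measure (UnitAddTorus ι))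
    [IsFiniteMeasure ν] [IsFiniteMeasure lam] (g : C(UnitAddTorus ι, ℂ)) (M : ℝ) (hM : ‖g‖ ≤ M)
    (h : ∀ n, ∫ t, mFourier n t ∂ν = ∫ t, mFourier n t * g t ∂lam) (B : Set (UnitAddTorus ι))
    (hB : MeasurableSet B) :
    ν B ≤ ENNReal.ofReal M * lam B := by
  have hint : ∀ (m : Measure (UnitAddTorus ι)) [IsFiniteMeasure m] (φ : C(UnitAddTorus ι, ℂ)),
      Integrable (fun t => φ t) m := fun m _ φ =>
    Integrable.of_bound φ.continuous.aestronglyMeasurable ‖φ‖ (ae_of_all _ φ.norm_coe_le_norm)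
  have hM0 : 0 ≤ M := (norm_nonneg _).trans hM
  have hall : ∀ φ : C(UnitAddTorus ι, ℂ), ∫ t, φ t ∂ν = ∫ t, φ t * g t ∂lam := by
    have hcont : ∀ (m : Measure (UnitAddTorus ι)) [IsFiniteMeasure m],
        Continuous fun φ : C(UnitAddTorus ι, ℂ) => ∫ t, φ t ∂m := by
      intro m _
      refine continuous_iff_continuousAt.2 fun φ₀ => ?_
      refine continuousAt_of_dominated (bound := fun _ => ‖φ₀‖ + 1)
        (Eventually.of_forall fun φ => (hint m φ).aestronglyMeasurable) ?_
        (integrable_const _) (ae_of_all _ fun t =>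
          (continuous_eval_const t).continuousAt)
      have : ∀ᶠ φ : C(UnitAddTorus ι, ℂ) in 𝓝 φ₀, ‖φ‖ < ‖φ₀‖ + 1 :=
        continuous_norm.continuousAt.eventually_lt continuousAt_const (lt_add_one _)
      filter_upwards [this] with φ hφ
      exact ae_of_all _ fun t => (φ.norm_coe_le_norm t).trans hφ.le
    let S : Submodule ℂ C(UnitAddTorus ι, ℂ) :=
      { carrier := {φ | ∫ t, φ t ∂ν = ∫ t, (φ * g) t ∂lam}
        zero_mem' := by simp
        add_mem' := by
          intro φ ψ h₁ h₂
          simp only [Set.mem_ofPred_eq, add_mul, ContinuousMap.add_apply] at *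
          rw [integral_add (hint ν φ) (hint ν ψ), integral_add (hint lam (φ * g))
            (hint lam (ψ * g)), h₁, h₂]
        smul_mem' := by
          intro c φ h₁
          simp only [Set.mem_ofPred_eq, smul_mul_assoc, ContinuousMap.smul_apply] at *
          rw [integral_smul, integral_smul, h₁] }
    have hS : IsClosed (S : Set C(UnitAddTorus ι, ℂ)) :=
      isClosed_eq (hcont ν) ((hcont lam).comp (continuous_mul_const g))
    have hspan : Submodule.span ℂ (Set.range (mFourier (d := ι))) ≤ S := by
      refine Submodule.span_le.2 ?_
      rintro _ ⟨n, rfl⟩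
      exact h n
    have htop := Submodule.topologicalClosure_minimal _ hspan hS
    rw [span_mFourier_closure_eq_top] at htop
    exact fun φ => htop Submodule.mem_top
  have hnn : ∀ φ : BoundedContinuousFunction (UnitAddTorus ι) NNReal,
      ∫⁻ t, φ t ∂ν ≤ ENNReal.ofReal M * ∫⁻ t, φ t ∂lam := by
    intro φ
    have hφc : Continuous fun t => ((φ t : ℝ) : ℂ) := by fun_prop
    have h1 := hall ⟨_, hφc⟩
    simp only [ContinuousMap.coe_mk] at h1
    have i1 := (hint ν ⟨_, hφc⟩).norm
    have i2 := (hint lam ⟨_, hφc⟩).norm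
    simp only [ContinuousMap.coe_mk, Complex.norm_real, NNReal.norm_eq] at i1 i2
    have e1 : ∀ (m : Measure (UnitAddTorus ι)), Integrable (fun t => (φ t : ℝ)) m →
        ∫⁻ t, φ t ∂m = ENNReal.ofReal (∫ t, (φ t : ℝ) ∂m) := by
      intro m hm
      rw [ofReal_integral_eq_lintegral_ofReal hm (ae_of_all _ fun t => (φ t).2)]
      simp
    rw [e1 ν i1, e1 lam i2, ← ENNReal.ofReal_mul hM0]
    apply ENNReal.ofReal_le_ofReal
    calc ∫ t, (φ t : ℝ) ∂ν ≤ ‖∫ t, ((φ t : ℝ) : ℂ) ∂ν‖ := by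
          rw [integral_complex_ofReal, Complex.norm_real]; exact le_abs_self _
      _ ≤ ∫ t, M * (φ t : ℝ) ∂lam := by
          rw [h1]
          refine norm_integral_le_of_norm_le (i2.const_mul M) (ae_of_all _ fun t => ?_)
          rw [norm_mul, Complex.norm_real, mul_comm, NNReal.norm_eq]
          exact mul_le_mul_of_nonneg_right ((g.norm_coe_le_norm t).trans hM) (φ t).2
      _ = _ := integral_const_mul _ _
  have hcl : ∀ F, IsClosed F → ν F ≤ ENNReal.ofReal M * lam F := by
    intro F hF
    have hpos : ∀ n : ℕ, (0 : ℝ) < 1 / ((n : ℝ) + 1) := fun n => by positivity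
    have t1 := tendsto_lintegral_thickenedIndicator_of_isClosed ν hF hpos
      tendsto_one_div_add_atTop_nhds_zero_nat
    have t2 := tendsto_lintegral_thickenedIndicator_of_isClosed lam hF hpos
      tendsto_one_div_add_atTop_nhds_zero_nat
    exact le_of_tendsto_of_tendsto' t1 (ENNReal.Tendsto.const_mul t2 (Or.inr ENNReal.ofReal_ne_top))
      fun n => hnn _
  rw [hB.measure_eq_iSup_isClosed_of_ne_top (measure_ne_top ν B)]
  refine iSup₂_le fun F hFB => iSup_le fun hF => (hcl F hF).trans ?_
  gcongr

/-! ### The lattice sum -/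

lemma sum_int_le {ε : ℝ} (h0 : 0 < ε) (h1 : ε ≤ 1) (s : Finset ℤ) :
    ∑ n ∈ s, (1 + ε ^ 2 * (n : ℝ) ^ 2)⁻¹ ≤ 5 / ε := by
  -- Comparison with a telescoping sum, using `(1 + εn)² ≤ 2 (1 + ε²n²)`.
  have key : ∀ N : ℕ, ∑ n ∈ Finset.range N, (1 + ε ^ 2 * ((n : ℝ) + 1) ^ 2)⁻¹ ≤
      2 / ε - 2 / (ε * (1 + ε * N)) := by
    intro N
    induction N with
    | zero => simp
    | succ N ih =>
      rw [Finset.sum_range_succ]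
      have : (1 + ε ^ 2 * ((N : ℝ) + 1) ^ 2)⁻¹ ≤
          2 / (ε * (1 + ε * N)) - 2 / (ε * (1 + ε * (N + 1))) := by
        have e : 2 / (ε * (1 + ε * N)) - 2 / (ε * (1 + ε * (N + 1))) =
            2 / ((1 + ε * N) * (1 + ε * (N + 1))) := by
          field_simp; ring
        rw [e, inv_eq_one_div, div_le_div_iff₀ (by positivity) (by positivity)]
        have : 0 ≤ ε * N := by positivity
        nlinarith [sq_nonneg (1 - ε * (N + 1))]
      push_cast
      linarith
  have key2 : ∀ N : ℕ, ∑ n ∈ Finset.range N, (1 + ε ^ 2 * ((n : ℝ) + 1) ^ 2)⁻¹ ≤ 2 / ε := by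
    intro N
    have : 0 ≤ 2 / (ε * (1 + ε * N)) := by positivity
    linarith [key N]
  have hf0 : ∀ n : ℤ, 0 ≤ (1 + ε ^ 2 * (n : ℝ) ^ 2)⁻¹ := fun n => by positivity
  have one : (1 : ℝ) ≤ 1 / ε := by rw [le_div_iff₀ h0]; linarith
  have spos : Summable fun n : ℕ => (1 + ε ^ 2 * ((n : ℝ) + 1) ^ 2)⁻¹ :=
    summable_of_sum_range_le (fun n => by positivity) key2
  have tpos : ∑' n : ℕ, (1 + ε ^ 2 * ((n : ℝ) + 1) ^ 2)⁻¹ ≤ 2 / ε :=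
    Real.tsum_le_of_sum_range_le (fun n => by positivity) key2
  have s0 : Summable fun n : ℕ => (1 + ε ^ 2 * (n : ℝ) ^ 2)⁻¹ :=
    (summable_nat_add_iff 1).1 (by simpa using spos)
  have h := HasSum.of_nat_of_neg_add_one (f := fun n : ℤ => (1 + ε ^ 2 * (n : ℝ) ^ 2)⁻¹)
    (by simpa using s0.hasSum)
    (by simpa [-neg_add_rev, neg_sq] using spos.hasSum)
  refine (sum_le_hasSum s (fun n _ => hf0 n) h).trans ?_
  rw [s0.tsum_eq_zero_add]
  have e : 5 / ε = 1 / ε + (2 / ε + 2 / ε) := by ring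
  push_cast
  rw [e]
  norm_num at tpos ⊢
  rw [one_div] at one
  linarith

/-- Each factor `1 + ε²nᵢ²` is at most `1 + ε²|n|²`, so the sum over `ℤ^d` is dominated by the `d`-th
power of a one-dimensional sum. -/
lemma sum_lattice_le (d : ℕ) {ε : ℝ} (h0 : 0 < ε) (h1 : ε ≤ 1) (s : Finset (Fin d → ℤ)) :
    ∑ n ∈ s, ((1 + ε ^ 2 * ∑ i, (n i : ℝ) ^ 2) ^ (d + 2))⁻¹ ≤ (5 / ε) ^ d := by
  classical
  calc ∑ n ∈ s, ((1 + ε ^ 2 * ∑ i, (n i : ℝ) ^ 2) ^ (d + 2))⁻¹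
      ≤ ∑ n ∈ s, ∏ i, (1 + ε ^ 2 * (n i : ℝ) ^ 2)⁻¹ := by
        refine Finset.sum_le_sum fun n _ => ?_
        have hS : 0 ≤ ∑ i, (n i : ℝ) ^ 2 := Finset.sum_nonneg fun i _ => sq_nonneg _
        rw [Finset.prod_inv_distrib]
        refine inv_anti₀ (Finset.prod_pos fun i _ => by positivity) ?_
        calc ∏ i, (1 + ε ^ 2 * (n i : ℝ) ^ 2)
            ≤ ∏ _i : Fin d, (1 + ε ^ 2 * ∑ i, (n i : ℝ) ^ 2) := by
              refine Finset.prod_le_prod (fun i _ => by positivity) fun i _ => ?_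
              gcongr
              exact Finset.single_le_sum (f := fun i => (n i : ℝ) ^ 2) (fun i _ => sq_nonneg _)
                (Finset.mem_univ i)
          _ = (1 + ε ^ 2 * ∑ i, (n i : ℝ) ^ 2) ^ d := by simp
          _ ≤ _ := pow_le_pow_right₀ (by nlinarith [mul_nonneg (sq_nonneg ε) hS]) (by omega)
    _ ≤ ∑ n ∈ (Fintype.piFinset fun i => s.image (fun n => n i) : Finset (Fin d → ℤ)),
          ∏ i, (1 + ε ^ 2 * ((n i : ℤ) : ℝ) ^ 2)⁻¹ := by
        refine Finset.sum_le_sum_of_subset_of_nonneg (fun n hn => ?_) fun n _ _ =>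
          Finset.prod_nonneg fun i _ => by positivity
        exact Fintype.mem_piFinset.2 fun i => Finset.mem_image_of_mem (fun n => n i) hn
    _ = ∏ i, ∑ j ∈ (s.image (fun n => n i) : Finset ℤ), (1 + ε ^ 2 * (j : ℝ) ^ 2)⁻¹ :=
        (Finset.prod_univ_sum (fun i => (s.image (fun n => n i) : Finset ℤ))
          (fun _ (j : ℤ) => (1 + ε ^ 2 * (j : ℝ) ^ 2)⁻¹)).symm
    _ ≤ ∏ _i : Fin d, (5 / ε) := by
        refine Finset.prod_le_prod (fun i _ => Finset.sum_nonneg fun j _ => by positivity)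
          fun i _ => sum_int_le h0 h1 _
    _ = (5 / ε) ^ d := by rw [Finset.prod_const, Finset.card_univ, Fintype.card_fin]

/-! ### The covering map of the torus -/

/-- The covering map `ℝ^d → (ℝ/2πℤ)^d`, the torus being rescaled to Mathlib's `(ℝ/ℤ)^d`. -/
def toTorus (d : ℕ) (x : Vd d) : UnitAddTorus (Fin d) :=
  fun i => ((x i / (2 * Real.pi) : ℝ) : UnitAddCircle)

/-- The measurable section of `toTorus` with values in the fundamental domain `[-π,π)^d`. -/
def torusLift (d : ℕ) (t : UnitAddTorus (Fin d)) : Vd d :=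
  fun i => 2 * Real.pi * (AddCircle.equivIco 1 (-(1 / 2) : ℝ) (t i) : ℝ)

lemma measurable_toTorus (d : ℕ) : Measurable (toTorus d) := by
  have : Continuous (toTorus d) := by
    refine continuous_pi fun i => ?_
    exact (AddCircle.continuous_mk' 1).comp (by fun_prop)
  exact this.measurable

lemma measurable_torusLift (d : ℕ) : Measurable (torusLift d) := by
  refine measurable_pi_lambda _ fun i => Measurable.const_mul ?_ _
  exact measurable_subtype_coe.comp
    ((AddCircle.measurableEquivIco 1 (-(1 / 2) : ℝ)).measurable.comp (measurable_pi_apply i))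

lemma torusLift_toTorus {d : ℕ} {x : Vd d} (hx : x ∈ fundDom d) :
    torusLift d (toTorus d x) = x := by
  ext i
  have hi := hx i (Set.mem_univ i)
  have hp := Real.pi_pos
  have : x i / (2 * Real.pi) ∈ Set.Ico (-(1 / 2) : ℝ) (-(1 / 2) + 1) := by
    constructor
    · rw [le_div_iff₀ (by positivity)]; linarith [hi.1]
    · rw [div_lt_iff₀ (by positivity)]; linarith [hi.2]
  simp only [torusLift, toTorus]
  rw [AddCircle.equivIco_coe_of_mem this]
  field_simp

lemma toTorus_add {d : ℕ} (x : Vd d) (k : Fin d → ℤ) :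
    toTorus d (x + fun i => 2 * Real.pi * (k i)) = toTorus d x := by
  ext i
  simp only [toTorus, Pi.add_apply]
  have : (x i + 2 * Real.pi * (k i)) / (2 * Real.pi) = x i / (2 * Real.pi) + k i := by
    field_simp
  rw [this, AddCircle.coe_add]
  have h0 : ((k i : ℝ) : UnitAddCircle) = 0 :=
    (AddCircle.coe_eq_zero_iff 1).2 ⟨k i, by simp⟩
  rw [h0, add_zero]

lemma mFourier_toTorus {d : ℕ} (n : Fin d → ℤ) (x : Vd d) :
    mFourier n (toTorus d x) = ∏ i, Complex.exp (Complex.I * n i * x i) := by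
  simp only [mFourier, ContinuousMap.coe_mk, toTorus]
  refine Finset.prod_congr rfl fun i _ => ?_
  rw [fourier_coe_apply]
  congr 1
  push_cast
  have : (Real.pi : ℂ) ≠ 0 := by exact_mod_cast Real.pi_ne_zero
  field_simp

lemma integral_exp_int (n : ℤ) :
    ∫ x in Set.Ico (-Real.pi) Real.pi, Complex.exp (Complex.I * n * x) =
      if n = 0 then (2 * Real.pi : ℂ) else 0 := by
  rw [integral_Ico_eq_integral_Ioo, ← integral_Ioc_eq_integral_Ioo,
    ← intervalIntegral.integral_of_le (by linarith [Real.pi_pos])]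
  split_ifs with h
  · subst h
    simp
    ring
  · rw [integral_exp_mul_complex (by simp [h])]
    have : Complex.exp (Complex.I * n * (Real.pi : ℝ)) =
        Complex.exp (Complex.I * n * ((-Real.pi : ℝ) : ℂ)) := by
      rw [Complex.exp_eq_exp_iff_exists_int]
      exact ⟨n, by push_cast; ring⟩
    rw [this, sub_self, zero_div]

lemma measurableSet_fundDom (d : ℕ) : MeasurableSet (fundDom d) :=
  MeasurableSet.univ_pi fun _ => measurableSet_Ico

lemma isFiniteMeasure_fundDom (d : ℕ) :
    IsFiniteMeasure ((volume : Measure (Vd d)).restrict (fundDom d)) := by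
  refine ⟨?_⟩
  rw [Measure.restrict_apply_univ, fundDom, volume_pi_pi]
  exact ENNReal.prod_lt_top fun i _ => by simp

lemma integral_mFourier {d : ℕ} (n : Fin d → ℤ) :
    ∫ t, mFourier n t ∂(Measure.map (toTorus d) (volume.restrict (fundDom d))) =
      if n = 0 then (2 * Real.pi : ℂ) ^ d else 0 := by
  rw [integral_map (measurable_toTorus d).aemeasurable
    (mFourier n).continuous.aestronglyMeasurable]
  simp only [mFourier_toTorus]
  rw [fundDom, volume_pi, Measure.restrict_pi_pi, integral_fintype_prod_eq_prod
    (fun i (y : ℝ) => Complex.exp (Complex.I * n i * y))]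
  simp only [integral_exp_int]
  split_ifs with h
  · subst h; simp
  · obtain ⟨i, hi⟩ := Function.ne_iff.1 h
    exact Finset.prod_eq_zero (Finset.mem_univ i) (by simpa using hi)

/-- Unfolding: the translates of `[-π,π)^d` by `2πℤ^d` tile `ℝ^d`. -/
lemma lintegral_unfold {d : ℕ} (G : Vd d → ℝ≥0∞) (hG : AEMeasurable G) :
    ∫⁻ x, G x = ∫⁻ x in fundDom d, ∑' k : Fin d → ℤ, G (x + fun i => 2 * Real.pi * (k i)) := by
  have hmp : ∀ k : Fin d → ℤ, MeasurePreserving (fun x : Vd d => x + fun i => 2 * Real.pi * (k i)) :=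
    fun k => measurePreserving_add_right volume _
  rw [lintegral_tsum (f := fun (k : Fin d → ℤ) (x : Vd d) => G (x + fun i => 2 * Real.pi * (k i)))
    fun k => (hG.comp_quasiMeasurePreserving (hmp k).quasiMeasurePreserving).restrict]
  let S : (Fin d → ℤ) → Set (Vd d) := fun k => {x | (x - fun i => 2 * Real.pi * (k i)) ∈ fundDom d}
  have hS : ∀ k, MeasurableSet (S k) := fun k =>
    (measurable_id.sub_const _) (measurableSet_fundDom d)
  have hmem : ∀ k x, x ∈ S k ↔ ∀ i, k i = ⌊(x i + Real.pi) / (2 * Real.pi)⌋ := by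
    intro k x
    have hp := Real.pi_pos
    simp only [S, fundDom, Set.mem_ofPred_eq, Set.mem_univ_pi, Pi.sub_apply, Set.mem_Ico]
    refine forall_congr' fun i => ?_
    rw [eq_comm, Int.floor_eq_iff, le_div_iff₀ (by positivity), div_lt_iff₀ (by positivity)]
    constructor <;> rintro ⟨h1, h2⟩ <;> constructor <;> linarith
  have hdisj : Pairwise (Function.onFun Disjoint S) := by
    intro k l hkl
    refine Set.disjoint_left.2 fun x h1 h2 => hkl ?_
    ext i
    rw [(hmem k x).1 h1 i, (hmem l x).1 h2 i]
  have hU : ⋃ k, S k = Set.univ := Set.eq_univ_of_forall fun x =>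
    Set.mem_iUnion.2 ⟨fun i => ⌊(x i + Real.pi) / (2 * Real.pi)⌋, (hmem _ x).2 fun i => rfl⟩
  rw [← setLIntegral_univ, ← hU, lintegral_iUnion hS hdisj]
  refine tsum_congr fun k => ?_
  rw [← (hmp k).setLIntegral_comp_preimage_emb (MeasurableEquiv.addRight _).measurableEmbedding]
  congr 2
  ext x
  simp [S]

/-! ### The sup bound and interpolation -/

/-- The periodization of `K` is bounded almost everywhere by the `ℓ¹` norm of its Fourier
coefficients `c n`. The left side is summed in `ℝ≥0∞`, so that summability of the periodization
is part of the conclusion. -/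
lemma periodize_ae_le {d : ℕ} (K : Vd d → ℝ) (hK0 : ∀ x, 0 ≤ K x) (hK : Integrable K)
    (c : (Fin d → ℤ) → ℂ) (hc : ∀ n, ∫ x, (K x : ℂ) * mFourier n (toTorus d x) = c n)
    (A : ℝ) (hs : Summable fun n => ‖c n‖) (hA : ∑' n, ‖c n‖ ≤ A) :
    ∀ᵐ x ∂(volume.restrict (fundDom d)),
      ∑' k : Fin d → ℤ, ENNReal.ofReal (K (x + fun i => 2 * Real.pi * (k i))) ≤
        ENNReal.ofReal A := by
  have := isFiniteMeasure_fundDom d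
  have hKm : AEMeasurable (fun x => ENNReal.ofReal (K x)) := hK.aemeasurable.ennreal_ofReal
  set F : Vd d → ℝ≥0∞ := fun x =>
    ∑' k : Fin d → ℤ, ENNReal.ofReal (K (x + fun i => 2 * Real.pi * (k i))) with hF
  set ν := Measure.map (toTorus d) (volume.withDensity fun x => ENNReal.ofReal (K x)) with hν
  set lam := Measure.map (toTorus d) (volume.restrict (fundDom d)) with hlam
  have : IsFiniteMeasure (volume.withDensity fun x => ENNReal.ofReal (K x)) :=
    isFiniteMeasure_withDensity_ofReal hK.2
  have : IsFiniteMeasure ν := Measure.isFiniteMeasure_map _ _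
  have : IsFiniteMeasure lam := Measure.isFiniteMeasure_map _ _
  have hπ : (0 : ℝ) < (2 * Real.pi) ^ d := by positivity
  have hπ1 : 1 ≤ (2 * Real.pi) ^ d := one_le_pow₀ (by linarith [Real.pi_gt_three])
  let e : (Fin d → ℤ) → C(UnitAddTorus (Fin d), ℂ) := fun k =>
    (((2 * Real.pi : ℂ) ^ d)⁻¹ * c k) • mFourier (-k)
  have hnorm : ∀ k, ‖e k‖ = ((2 * Real.pi) ^ d)⁻¹ * ‖c k‖ := by
    intro k
    simp only [e, norm_smul, mFourier_norm, mul_one, norm_mul, norm_inv, norm_pow]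
    simp [abs_of_pos Real.pi_pos]
  have hesum : Summable fun k => ‖e k‖ := by
    simp only [hnorm]; exact hs.mul_left _
  have hA0 : 0 ≤ ∑' n, ‖c n‖ := tsum_nonneg fun n => norm_nonneg _
  have hgA : ‖∑' k, e k‖ ≤ A := by
    refine (norm_tsum_le_tsum_norm hesum).trans ?_
    simp only [hnorm]
    rw [tsum_mul_left]
    refine le_trans ?_ hA
    exact mul_le_of_le_one_left hA0 (inv_le_one_of_one_le₀ hπ1)
  have hcoef : ∀ n, ∫ t, mFourier n t ∂ν = ∫ t, mFourier n t * (∑' k, e k) t ∂lam := by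
    intro n
    have h1 : ∫ t, mFourier n t ∂ν = c n := by
      rw [hν, integral_map (measurable_toTorus d).aemeasurable
        (mFourier n).continuous.aestronglyMeasurable,
        integral_withDensity_eq_integral_toReal_smul₀ hKm (ae_of_all _ fun x => by simp), ← hc n]
      refine integral_congr_ae (ae_of_all _ fun x => ?_)
      simp [ENNReal.toReal_ofReal (hK0 x)]
    -- Orthogonality of the monomials.
    have hterm : ∀ k, ∫ t, mFourier n t * e k t ∂lam = if k = n then c n else 0 := by
      intro k
      have : ∀ t, mFourier n t * e k t =
          (((2 * Real.pi : ℂ) ^ d)⁻¹ * c k) * mFourier (n + -k) t := by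
        intro t
        rw [mFourier_add]
        simp only [e, ContinuousMap.smul_apply, smul_eq_mul]
        ring
      simp only [this]
      rw [integral_const_mul, integral_mFourier]
      by_cases h : k = n
      · subst h
        have : (2 * Real.pi : ℂ) ^ d ≠ 0 := by exact_mod_cast hπ.ne'
        simp only [add_neg_cancel, if_true]
        field_simp
      · rw [if_neg h, if_neg (by rwa [← sub_eq_add_neg, sub_eq_zero, eq_comm]), mul_zero]
    have hbd : ∀ k t, ‖mFourier n t * e k t‖ ≤ ‖e k‖ := by
      intro k t
      rw [norm_mul]
      have h1 := (mFourier n).norm_coe_le_norm t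
      rw [mFourier_norm] at h1
      exact (mul_le_of_le_one_left (norm_nonneg _) h1).trans ((e k).norm_coe_le_norm t)
    have hint : ∀ k, Integrable (fun t => mFourier n t * e k t) lam := fun k =>
      Integrable.of_bound (by fun_prop) ‖e k‖ (ae_of_all _ (hbd k))
    have hsum := hasSum_integral_of_summable_integral_norm hint
      (Summable.of_nonneg_of_le (fun k => integral_nonneg fun t => norm_nonneg _)
        (fun k => (integral_mono (hint k).norm (integrable_const _) (hbd k)).trans_eq
          (by simp [integral_const])) (hesum.mul_left (lam.real Set.univ)))
    simp only [hterm] at hsum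
    have h2 := hsum.unique (hasSum_ite_eq n (c n))
    rw [h1, ← h2]
    refine integral_congr_ae (ae_of_all _ fun t => ?_)
    simp only
    rw [tsum_mul_left, ContinuousMap.tsum_apply hesum.of_norm]
  -- A measurable subset `B` of the fundamental domain corresponds to the set `torusLift ⁻¹' B` of the
  -- torus, whose `ν`-measure unfolds to the integral of the periodization over `B`.
  refine ae_le_of_forall_setLIntegral_le_of_sigmaFinite₀ ?_ fun B hB _ => ?_
  · exact AEMeasurable.tsum fun k => (hKm.comp_quasiMeasurePreserving
      (measurePreserving_add_right volume _).quasiMeasurePreserving).restrict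
  · have hE := measurable_torusLift d hB
    have key := measure_le_of_mFourier ν lam _ A hgA hcoef _ hE
    have hpre : MeasurableSet (toTorus d ⁻¹' (torusLift d ⁻¹' B)) := measurable_toTorus d hE
    rw [hν, hlam, Measure.map_apply (measurable_toTorus d) hE,
      Measure.map_apply (measurable_toTorus d) hE, withDensity_apply _ hpre,
      ← lintegral_indicator hpre, lintegral_unfold _ (hKm.indicator hpre)] at key
    have hBQ : (volume.restrict (fundDom d)) (toTorus d ⁻¹' (torusLift d ⁻¹' B)) =
        (volume.restrict (fundDom d)) B := by
      rw [Measure.restrict_apply hpre, Measure.restrict_apply hB]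
      congr 1
      ext x
      refine and_congr_left fun hx => ?_
      rw [Set.mem_preimage, Set.mem_preimage, torusLift_toTorus hx]
    rw [hBQ] at key
    rw [setLIntegral_const, ← lintegral_indicator hB]
    refine le_of_eq_of_le (setLIntegral_congr_fun (measurableSet_fundDom d) fun x hx => ?_) key
    by_cases hxB : x ∈ B
    · simp [Set.indicator, toTorus_add, torusLift_toTorus hx, hxB]
    · simp [Set.indicator, toTorus_add, torusLift_toTorus hx, hxB]

/-- Valid also where the real series diverges, since `periodize` then takes the value `0`. -/
lemma enorm_periodize_le {d : ℕ} (K : Vd d → ℝ) (hK0 : ∀ x, 0 ≤ K x) (x : Vd d) :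
    ‖periodize d K x‖ₑ ≤
      ∑' k : Fin d → ℤ, ENNReal.ofReal (K (x + fun i => 2 * Real.pi * (k i))) := by
  unfold periodize
  refine enorm_tsum_le_tsum_enorm.trans_eq (tsum_congr fun k => ?_)
  exact Real.enorm_of_nonneg (hK0 _)

/-- The interpolation `‖f‖_p ≤ ‖f‖_1^{1/p} ‖f‖_∞^{1-1/p}`, for a function dominated by some `F`
with `‖F‖_1 ≤ 1`; no measurability is required of `f` or `F`. -/
lemma eLpNorm_le_interp {α : Type*} [MeasurableSpace α] (m : Measure α) (f : α → ℝ)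
    (F : α → ℝ≥0∞) (hfF : ∀ x, ‖f x‖ₑ ≤ F x) (hF1 : ∫⁻ x, F x ∂m ≤ 1) (A : ℝ≥0∞) (hAt : A ≠ ∞)
    (hFA : ∀ᵐ x ∂m, F x ≤ A) (p : ℝ≥0∞) (hp : 1 ≤ p) (hpt : p ≠ ∞) :
    eLpNorm f p m ≤ A ^ ((p.toReal - 1) / p.toReal) := by
  have hp0 : p ≠ 0 := (zero_lt_one.trans_le hp).ne'
  have hp1 : 1 ≤ p.toReal := by
    rw [← ENNReal.toReal_one]; exact ENNReal.toReal_mono hpt hp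
  rw [eLpNorm_eq_lintegral_rpow_enorm_toReal hp0 hpt]
  have : ∫⁻ x, ‖f x‖ₑ ^ p.toReal ∂m ≤ A ^ (p.toReal - 1) := by
    calc ∫⁻ x, ‖f x‖ₑ ^ p.toReal ∂m ≤ ∫⁻ x, A ^ (p.toReal - 1) * F x ∂m := by
          refine lintegral_mono_ae ?_
          filter_upwards [hFA] with x hx
          calc ‖f x‖ₑ ^ p.toReal ≤ F x ^ ((p.toReal - 1) + 1) := by
                rw [sub_add_cancel]; exact ENNReal.rpow_le_rpow (hfF x) (by linarith)
            _ = F x ^ (p.toReal - 1) * F x := by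
                rw [ENNReal.rpow_add_of_nonneg _ _ (by linarith) zero_le_one, ENNReal.rpow_one]
            _ ≤ _ := by gcongr
      _ = A ^ (p.toReal - 1) * ∫⁻ x, F x ∂m :=
          lintegral_const_mul' _ _ (ENNReal.rpow_ne_top_of_nonneg (by linarith) hAt)
      _ ≤ _ := mul_le_of_le_one_right' hF1
  calc _ ≤ (A ^ (p.toReal - 1)) ^ (1 / p.toReal) := by gcongr
    _ = _ := by rw [← ENNReal.rpow_mul]; congr 1; ring

lemma mFourier_toTorus_eq_exp {d : ℕ} (n : Fin d → ℤ) (x : Vd d) :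
    mFourier n (toTorus d x) =
      Complex.exp (-Complex.I * (∑ i, (x i : ℂ) * ((-(n i : ℝ) : ℝ) : ℂ))) := by
  rw [mFourier_toTorus, ← Complex.exp_sum, Finset.mul_sum]
  congr 1
  refine Finset.sum_congr rfl fun i _ => ?_
  push_cast
  ring

/-- L^p bound on the periodization of the Bessel-type kernel:
`‖𝐓K̃_μ‖_{L^p(𝕋)} ≤ C·[μ]^{-d(p-1)/p}` uniformly in `μ ∈ (0,1]`, the `L^p` norm on the
torus being computed over the fundamental domain `[-π,π)^d`. -/
theorem stmt12 (d : ℕ) (hd : 0 < d) (σ : ℝ) (hσ : 0 < σ) (p : ℝ≥0∞) (hp : 1 ≤ p)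
    (K : ℝ → Vd d → ℝ) (hK : IsBessel d σ K) :
    ∃ C : ℝ, 0 < C ∧ ∀ μ ∈ Set.Ioc (0 : ℝ) 1,
      eLpNorm (periodize d (K μ)) p (volume.restrict (fundDom d))
        ≤ ENNReal.ofReal (C * (μ ^ (1 / σ)) ^ (-(pExp d p))) := by
  have hB : ∀ μ ∈ Set.Ioc (0 : ℝ) 1, ∀ᵐ x ∂(volume.restrict (fundDom d)),
      ∑' k : Fin d → ℤ, ENNReal.ofReal (K μ (x + fun i => 2 * Real.pi * (k i))) ≤
        ENNReal.ofReal ((5 / μ ^ (1 / σ)) ^ d) := by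
    intro μ hμ
    obtain ⟨h0, hi, -, hft⟩ := hK μ hμ
    have e0 : 0 < μ ^ (1 / σ) := Real.rpow_pos_of_pos hμ.1 _
    have e1 : μ ^ (1 / σ) ≤ 1 := Real.rpow_le_one hμ.1.le hμ.2 (by positivity)
    have hnorm : ∀ n : Fin d → ℤ, ‖ft d (K μ) (fun i => -(n i : ℝ))‖ =
        ((1 + (μ ^ (1 / σ)) ^ 2 * ∑ i, (n i : ℝ) ^ 2) ^ (d + 2))⁻¹ := by
      intro n
      have hS : 0 ≤ ∑ i, (n i : ℝ) ^ 2 := Finset.sum_nonneg fun i _ => sq_nonneg _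
      rw [hft, norm_inv, Complex.norm_real, Real.norm_of_nonneg (by positivity)]
      simp only [neg_sq]
    refine periodize_ae_le (K μ) h0 hi (fun n => ft d (K μ) (fun i => -(n i : ℝ))) (fun n => ?_) _
      ?_ ?_
    · simp only [ft, mFourier_toTorus_eq_exp, mul_comm]
    · simp only [hnorm]
      exact summable_of_sum_le (fun n => by positivity) (sum_lattice_le d e0 e1)
    · simp only [hnorm]
      exact Real.tsum_le_of_sum_le (fun n => by positivity) (sum_lattice_le d e0 e1)
  have hL1 : ∀ μ ∈ Set.Ioc (0 : ℝ) 1, ∫⁻ x in fundDom d,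
      ∑' k : Fin d → ℤ, ENNReal.ofReal (K μ (x + fun i => 2 * Real.pi * (k i))) ≤ 1 := by
    intro μ hμ
    obtain ⟨h0, hi, h1, -⟩ := hK μ hμ
    rw [← lintegral_unfold (fun x => ENNReal.ofReal (K μ x)) hi.aemeasurable.ennreal_ofReal,
      ← ofReal_integral_eq_lintegral_ofReal hi (ae_of_all _ h0), h1, ENNReal.ofReal_one]
  by_cases hpt : p = ∞
  · refine ⟨5 ^ d, by positivity, fun μ hμ => ?_⟩
    have e0 : 0 < μ ^ (1 / σ) := Real.rpow_pos_of_pos hμ.1 _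
    subst hpt
    rw [eLpNorm_exponent_top, pExp, if_pos rfl, Real.rpow_neg e0.le, Real.rpow_natCast,
      ← div_eq_mul_inv, ← div_pow]
    refine eLpNormEssSup_le_of_ae_enorm_bound ?_
    filter_upwards [hB μ hμ] with x hx
    exact (enorm_periodize_le _ (hK μ hμ).1 x).trans hx
  · refine ⟨(5 ^ d) ^ ((p.toReal - 1) / p.toReal), by positivity, fun μ hμ => ?_⟩
    have e0 : 0 < μ ^ (1 / σ) := Real.rpow_pos_of_pos hμ.1 _
    have hp1 : 1 ≤ p.toReal := by
      rw [← ENNReal.toReal_one]; exact ENNReal.toReal_mono hpt hp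
    refine (eLpNorm_le_interp _ _ _ (enorm_periodize_le _ (hK μ hμ).1) (hL1 μ hμ) _
      ENNReal.ofReal_ne_top (hB μ hμ) p hp hpt).trans_eq ?_
    rw [ENNReal.ofReal_rpow_of_nonneg (by positivity) (div_nonneg (by linarith) (by linarith)),
      pExp, if_neg hpt, div_pow, Real.div_rpow (by positivity) (by positivity), div_eq_mul_inv,
      ← Real.rpow_natCast (μ ^ (1 / σ)) d, ← Real.rpow_mul e0.le, ← Real.rpow_neg e0.le]
    congr 3
    ring
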